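/- If H is a 4-uniform hypergraph, then τ_g(H) ≤ (71/252)(n(H) + m(H)). -/

import Mathlib

variable {V : Type} [Fintype V] [DecidableEq V]

/-- The set of legal moves in the transversal game with uncovered edge set `E`:
the vertices hitting at least one uncovered edge. -/
def playable (E : Finset (Finset V)) : Finset V :=
  Finset.univ.filter (fun v => ∃ e ∈ E, v ∈ e)

/-- The number of moves remaining in the transversal game with uncovered edge set `E`
under optimal play, where `ehTurn = true` iff Edge-hitter (the minimizer) moves next;
Staller (the maximizer) moves next iff `ehTurn = false`.  Each move must hit at least
one uncovered edge, and the game ends when no uncovered edge remains. -/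
def gameVal (ehTurn : Bool) (E : Finset (Finset V)) : ℕ :=
  if h : (playable E).Nonempty then
    1 +
      (if ehTurn then
        (playable E).attach.inf' (Finset.attach_nonempty_iff.mpr h)
          (fun v => gameVal (!ehTurn) (E.filter (fun e => v.1 ∉ e)))
      else
        (playable E).attach.sup' (Finset.attach_nonempty_iff.mpr h)
          (fun v => gameVal (!ehTurn) (E.filter (fun e => v.1 ∉ e))))
  else 0
termination_by E.card
decreasing_by
  all_goals
    obtain ⟨v, hv⟩ := v
    simp only [playable, Finset.mem_filter, Finset.mem_univ, true_and] at hv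
    obtain ⟨e, he, hve⟩ := hv
    exact Finset.card_lt_card (Finset.filter_ssubset.mpr ⟨e, he, by simp [hve]⟩)

/-- The game transversal number `τ_g`: Edge-hitter makes the first move. -/
def gameTransversalNum (E : Finset (Finset V)) : ℕ := gameVal true E

/-- The Staller-start game transversal number `τ_g'`: Staller makes the first move. -/
def stallerGameTransversalNum (E : Finset (Finset V)) : ℕ := gameVal false E

/-- The transversal number `τ`: the minimum size of a set of vertices meeting all edges. -/
noncomputable def transversalNum (E : Finset (Finset V)) : ℕ :=
  sInf {n | ∃ T : Finset V, (∀ e ∈ E, ∃ v ∈ T, v ∈ e) ∧ T.card = n}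

/-!
The proof is a potential argument. Suppose that a potential `Φ` is at least `c` as long as edges
remain, and that Edge-hitter can always move so that, whatever Staller replies, the two moves
together lower `Φ` by at least `2c`. Then the game lasts at most `Φ / c` moves.

While the maximum degree is at least three, Edge-hitter plays a vertex of maximum degree, and `Φ`
is a sum of weights of the edges and the vertices, the weight of a vertex depending on its degree.
Once all degrees are at most two, `Φ` is `9 m - n₂`, with `n₂` the number of vertices of degree two,
minus one more if some vertex of degree two lies in two edges that together contain at most six
of them. Edge-hitter plays a vertex of degree two so as to destroy as few such vertices as possible,
inside two edges that intersect as much as possible. The only reply that could then lower `Φ` by too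
little is a vertex of degree one whose edge contains three vertices of degree two. Counting how the
edges that meet Staller's edge are distributed over the two edges hit by Edge-hitter shows
that such a reply leaves a hypergraph in which the extra unit is subtracted.
-/

namespace TransversalGame

open Finset

section Degree

variable {α : Type*} [DecidableEq α] {E F : Finset (Finset α)} {e f g : Finset α} {v x : α}

/-- The degree of the vertex `v` in the hypergraph with edge set `E`. -/
def degree (E : Finset (Finset α)) (v : α) : ℕ := #{e ∈ E | v ∈ e}

/-- The residual hypergraph after `x` is played: the edges not hit by `x`. The vertex set is kept,
so a vertex all of whose edges are hit becomes isolated. -/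
def residual (E : Finset (Finset α)) (x : α) : Finset (Finset α) := {e ∈ E | x ∉ e}

theorem mem_residual : e ∈ residual E x ↔ e ∈ E ∧ x ∉ e := mem_filter

theorem residual_subset : residual E x ⊆ E := filter_subset _ _

theorem degree_mono (h : F ⊆ E) : degree F v ≤ degree E v :=
  card_le_card (filter_subset_filter _ h)

theorem degree_residual_le : degree (residual E x) v ≤ degree E v := degree_mono residual_subset

theorem degree_le_card : degree E v ≤ #E := card_filter_le _ _

theorem card_residual_add_degree : #(residual E x) + degree E x = #E := by
  rw [add_comm]
  exact card_filter_add_card_filter_not _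

theorem degree_residual_self : degree (residual E x) x = 0 := by
  simp only [degree, residual, filter_filter, card_eq_zero, not_and_self_iff, filter_false]

theorem degree_residual_add_degree_filter (E : Finset (Finset α)) (x v : α) :
    degree (residual E x) v + degree {e ∈ E | x ∈ e} v = degree E v := by
  simp only [degree, residual, filter_comm (_ ∈ ·) (v ∈ ·), filter_comm (_ ∉ ·) (v ∈ ·)]
  rw [add_comm]
  exact card_filter_add_card_filter_not _

theorem sum_degree [Fintype α] (E : Finset (Finset α)) : ∑ v, degree E v = ∑ e ∈ E, #e := by
  simpa [degree, bipartiteAbove, bipartiteBelow] using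
    sum_card_bipartiteAbove_eq_sum_card_bipartiteBelow (s := univ) (t := E) fun (v : α) e => v ∈ e

theorem two_le_degree (he : e ∈ E) (hf : f ∈ E) (hef : e ≠ f) (hve : v ∈ e) (hvf : v ∈ f) :
    2 ≤ degree E v :=
  one_lt_card.2 ⟨e, mem_filter.2 ⟨he, hve⟩, f, mem_filter.2 ⟨hf, hvf⟩, hef⟩

theorem exists_edge_ne (h : 2 ≤ degree E v) (e : Finset α) : ∃ f ∈ E, f ≠ e ∧ v ∈ f := by
  obtain ⟨f, hf, hfe⟩ := exists_mem_ne h e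
  exact ⟨f, (mem_filter.1 hf).1, hfe, (mem_filter.1 hf).2⟩

theorem eq_or_eq_of_degree_le_two (h : degree E v ≤ 2) (he : e ∈ E) (hf : f ∈ E) (hef : e ≠ f)
    (hve : v ∈ e) (hvf : v ∈ f) (hg : g ∈ E) (hvg : v ∈ g) : g = e ∨ g = f := by
  by_contra! hne
  exact h.not_gt <| two_lt_card.2 ⟨e, mem_filter.2 ⟨he, hve⟩, f, mem_filter.2 ⟨hf, hvf⟩,
    g, mem_filter.2 ⟨hg, hvg⟩, hef, hne.1.symm, hne.2.symm⟩

theorem eq_of_degree_le_one (h : degree E v ≤ 1) (he : e ∈ E) (hve : v ∈ e) (hf : f ∈ E)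
    (hvf : v ∈ f) : f = e := by
  by_contra hne
  exact h.not_gt (two_le_degree hf he hne hvf hve)

end Degree

section Game

variable {E : Finset (Finset V)} {v : V}

theorem mem_playable : v ∈ playable E ↔ 0 < degree E v := by
  simp [playable, degree, card_pos, Finset.Nonempty]

theorem gameVal_eq_zero {b : Bool} (h : ¬ (playable E).Nonempty) : gameVal b E = 0 := by
  rw [gameVal, dif_neg h]

theorem gameVal_true_le (hv : v ∈ playable E) :
    gameVal true E ≤ 1 + gameVal false (residual E v) := by
  rw [gameVal, dif_pos ⟨v, hv⟩, if_pos rfl]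
  exact Nat.add_le_add_left (inf'_le _ (mem_attach _ ⟨v, hv⟩)) 1

theorem exists_gameVal_false_eq (h : (playable E).Nonempty) :
    ∃ y ∈ playable E, gameVal false E = 1 + gameVal true (residual E y) := by
  obtain ⟨y, -, hy⟩ := exists_mem_eq_sup' (attach_nonempty_iff.2 h)
    fun v => gameVal true (residual E v.1)
  refine ⟨y, y.2, ?_⟩
  rw [gameVal, dif_pos h, if_neg Bool.false_ne_true, ← hy]
  rfl

theorem mul_gameVal_le_of_potential {c : ℤ} (hc : 0 ≤ c) {P : Finset (Finset V) → Prop}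
    (hP : ∀ E x, P E → P (residual E x)) {Φ : Finset (Finset V) → ℤ}
    (hround : ∀ E, P E → c * gameVal true E ≤ Φ E ∨ c ≤ Φ E ∧ ∃ x ∈ playable E,
      ∀ y ∈ playable (residual E x), Φ (residual (residual E x) y) + 2 * c ≤ Φ E)
    (hE : P E) : c * gameVal true E ≤ Φ E := by
  induction h : #E using Nat.strong_induction_on generalizing E with
  | _ n ih =>
    subst h
    obtain hle | ⟨hcE, x, hx, hxy⟩ := hround E hE
    · exact hle
    have hx_le := gameVal_true_le hx
    by_cases hend : (playable (residual E x)).Nonempty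
    · obtain ⟨y, hy, hy_eq⟩ := exists_gameVal_false_eq hend
      have hcard : #(residual (residual E x) y) < #E := by
        have := card_residual_add_degree (E := E) (x := x)
        have := card_residual_add_degree (E := residual E x) (x := y)
        have := mem_playable.1 hy
        omega
      calc c * gameVal true E
          ≤ c * (gameVal true (residual (residual E x) y) + 2) := by gcongr; omega
        _ = c * gameVal true (residual (residual E x) y) + 2 * c := by ring
        _ ≤ Φ (residual (residual E x) y) + 2 * c := by
            gcongr
            exact ih _ hcard (hP _ y (hP _ x hE)) rfl
        _ ≤ Φ E := hxy y hy
    · rw [gameVal_eq_zero hend] at hx_le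
      calc c * gameVal true E ≤ c * 1 := by gcongr; exact_mod_cast hx_le
        _ ≤ Φ E := by rwa [mul_one]

theorem gameVal_true_le_card (E : Finset (Finset V)) : gameVal true E ≤ #E := by
  have h := mul_gameVal_le_of_potential (P := fun _ => True) (Φ := fun E => (#E : ℤ)) (c := 1)
    zero_le_one (fun _ _ _ => trivial) (fun E _ => ?_) (E := E) trivial
  · simpa using h
  by_cases hE : (playable E).Nonempty
  · obtain ⟨x, hx⟩ := hE
    have hx_card := card_residual_add_degree (E := E) (x := x)
    have hx_pos := mem_playable.1 hx
    refine Or.inr ⟨by omega, x, hx, fun y hy => ?_⟩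
    have hy_card := card_residual_add_degree (E := residual E x) (x := y)
    have hy_pos := mem_playable.1 hy
    omega
  · simp [gameVal_eq_zero hE]

end Game

section Weight

variable {w δ : ℤ} {φ : ℕ → ℤ} {k : ℕ}

section

variable {α : Type*} [Fintype α] [DecidableEq α] {E : Finset (Finset α)}

/-- The weight of a hypergraph: each edge counts `w` and each vertex of degree `d` counts `φ d`. -/
def weight (w : ℤ) (φ : ℕ → ℤ) (E : Finset (Finset α)) : ℤ := w * #E + ∑ v, φ (degree E v)

theorem add_le_weight (hw : 0 ≤ w) (hφ : ∀ v, 0 ≤ φ (degree E v)) (x : α) :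
    w * degree E x + φ (degree E x) ≤ weight w φ E := by
  have hdeg : (degree E x : ℤ) ≤ #E := mod_cast degree_le_card
  have hsum := single_le_sum (f := fun v => φ (degree E v)) (fun v _ => hφ v) (mem_univ x)
  rw [weight]
  gcongr

theorem add_mul_le_of_forall_add_le {n : ℕ} (hφ : ∀ d < n, φ d + δ ≤ φ (d + 1)) (a j : ℕ)
    (h : a + j ≤ n) : φ a + δ * j ≤ φ (a + j) := by
  induction j with
  | zero => simp
  | succ j ih =>
    have := ih (by omega)
    have := hφ (a + j) (by omega)
    rw [← add_assoc]
    push_cast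
    linarith

-- The `degree E x` edges hit by `x` contain `k * degree E x` incidences with vertices other than
-- `x`, each of which lowers the weight of its vertex by at least `δ`.
theorem weight_residual_add_le (huni : ∀ e ∈ E, #e = k + 1) (hφ₀ : φ 0 = 0)
    (hφ : ∀ v, ∀ d < degree E v, φ d + δ ≤ φ (d + 1)) (x : α) :
    weight w φ (residual E x) + (w + k * δ) * degree E x + φ (degree E x) ≤ weight w φ E := by
  set F : Finset (Finset α) := {e ∈ E | x ∈ e}
  have hFx : degree F x = degree E x := by
    rw [← degree_residual_add_degree_filter E x x, degree_residual_self, zero_add]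
  have hFsum : ∑ v, (degree F v : ℤ) = (k + 1) * degree E x := by
    have hFuni : ∀ e ∈ F, #e = k + 1 := fun e he => huni e (mem_filter.1 he).1
    have hFcard : #F = degree E x := rfl
    rw [← Nat.cast_sum, sum_degree, sum_const_nat hFuni, hFcard]
    push_cast
    ring
  have hvertex : ∀ v, φ (degree (residual E x) v) + δ * degree F v ≤ φ (degree E v) := fun v => by
    have hsplit := degree_residual_add_degree_filter E x v
    simpa only [hsplit] using add_mul_le_of_forall_add_le (hφ v) _ _ hsplit.le
  have hothers := sum_le_sum fun v (_ : v ∈ univ.erase x) => hvertex v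
  rw [sum_add_distrib, ← mul_sum] at hothers
  have hres := add_sum_erase univ (fun v => φ (degree (residual E x) v)) (mem_univ x)
  have hall := add_sum_erase univ (fun v => φ (degree E v)) (mem_univ x)
  have hhit := add_sum_erase univ (fun v => (degree F v : ℤ)) (mem_univ x)
  have hcard : (#(residual E x) : ℤ) + degree E x = #E := mod_cast card_residual_add_degree
  simp only [degree_residual_self, hφ₀, zero_add] at hres
  rw [hFsum, hFx, ← eq_sub_iff_add_eq'] at hhit
  rw [hhit] at hothers
  rw [weight, weight, ← hres, ← hall, ← hcard]
  linarith

end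

variable {E : Finset (Finset V)}

theorem weight_residual_residual_add_le (hw : 0 ≤ w) (hδ : 0 ≤ δ) (huni : ∀ e ∈ E, #e = k + 1)
    (hφ₀ : φ 0 = 0) (hφ : ∀ v, ∀ d < degree E v, φ d + δ ≤ φ (d + 1)) {x y : V}
    (hy : y ∈ playable (residual E x)) :
    weight w φ (residual (residual E x) y) + (w + k * δ) * (degree E x + 1) + φ (degree E x) + φ 1
      ≤ weight w φ E := by
  have hx_le := weight_residual_add_le (w := w) huni hφ₀ hφ x
  have hφ' : ∀ v, ∀ d < degree (residual E x) v, φ d + δ ≤ φ (d + 1) :=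
    fun v d hd => hφ v d (hd.trans_le degree_residual_le)
  have hy_le := weight_residual_add_le (w := w) (fun e he => huni e (residual_subset he)) hφ₀ hφ' y
  obtain ⟨j, hj⟩ := Nat.exists_eq_add_of_le (mem_playable.1 hy)
  have hmono := add_mul_le_of_forall_add_le (hφ' y) 1 j (by omega)
  rw [hj] at hy_le
  push_cast at hy_le
  have : 0 ≤ (w + k * δ) * j := by positivity
  have : 0 ≤ δ * j := by positivity
  linarith

theorem mul_gameVal_le_weight_succ {c : ℤ} {Δ : ℕ} (hc : 0 ≤ c) (hw : 0 ≤ w) (hδ : 0 ≤ δ)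
    (hφ₀ : φ 0 = 0) (hφ : ∀ d ≤ Δ, φ d + δ ≤ φ (d + 1))
    (hmove : c ≤ w * (Δ + 1) + φ (Δ + 1))
    (hround : 2 * c ≤ (w + k * δ) * (Δ + 2) + φ (Δ + 1) + φ 1)
    (hbase : ∀ E : Finset (Finset V), (∀ e ∈ E, #e = k + 1) → (∀ v, degree E v ≤ Δ) →
      c * gameVal true E ≤ weight w φ E)
    (huni : ∀ e ∈ E, #e = k + 1) (hΔ : ∀ v, degree E v ≤ Δ + 1) :
    c * gameVal true E ≤ weight w φ E := by
  refine mul_gameVal_le_of_potential hc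
    (P := fun E => (∀ e ∈ E, #e = k + 1) ∧ ∀ v, degree E v ≤ Δ + 1)
    (fun E x hE => ⟨fun e he => hE.1 e (residual_subset he),
      fun v => degree_residual_le.trans (hE.2 v)⟩) ?_ ⟨huni, hΔ⟩
  rintro E ⟨huni, hΔ⟩
  by_cases hlow : ∀ v, degree E v ≤ Δ
  · exact Or.inl (hbase E huni hlow)
  push Not at hlow
  obtain ⟨x, hx⟩ := hlow
  have hxΔ : degree E x = Δ + 1 := (hΔ x).antisymm hx
  have hslope : ∀ v, ∀ d < degree E v, φ d + δ ≤ φ (d + 1) :=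
    fun v d hd => hφ d (Nat.lt_succ_iff.1 (hd.trans_le (hΔ v)))
  have hnonneg : ∀ v, 0 ≤ φ (degree E v) := fun v => by
    have hv := add_mul_le_of_forall_add_le (hslope v) 0 (degree E v) (zero_add _).le
    rw [hφ₀, zero_add, zero_add] at hv
    exact hv.trans' (by positivity)
  refine Or.inr ⟨?_, x, mem_playable.2 (by omega), fun y hy => ?_⟩
  · have := add_le_weight hw hnonneg x
    rw [hxΔ] at this
    push_cast at this
    linarith
  · have := weight_residual_residual_add_le hw hδ huni hφ₀ hslope hy
    rw [hxΔ] at this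
    push_cast at this
    linarith

end Weight

section DegreeTwo

variable {α : Type*} [Fintype α] [DecidableEq α] {E : Finset (Finset α)}
  {e e₁ e₂ f l : Finset α} {v x y z : α}

/-- The vertices of degree two. -/
def doubles (E : Finset (Finset α)) : Finset α := {v | degree E v = 2}

/-- The vertices that have degree two before, but not after, `x` is played. -/
def lost (E : Finset (Finset α)) (x : α) : Finset α := doubles E \ doubles (residual E x)

/-- Some vertex of degree two can be played at the cost of at most six vertices of degree two. In a
`4`-uniform hypergraph the cost never exceeds seven. -/
def Irregular (E : Finset (Finset α)) : Prop := ∃ x ∈ doubles E, #(lost E x) ≤ 6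

theorem mem_doubles : v ∈ doubles E ↔ degree E v = 2 := by simp [doubles]

theorem mem_lost : v ∈ lost E x ↔ v ∈ doubles E ∧ ∃ e ∈ E, x ∈ e ∧ v ∈ e := by
  have hhit : 0 < degree {e ∈ E | x ∈ e} v ↔ ∃ e ∈ E, x ∈ e ∧ v ∈ e := by
    simp [degree, card_pos, Finset.Nonempty, and_assoc]
  have hsplit := degree_residual_add_degree_filter E x v
  rw [lost, mem_sdiff, ← hhit, mem_doubles, mem_doubles]
  omega

theorem card_doubles_residual_add_card_lost (hΔ : ∀ v, degree E v ≤ 2) (x : α) :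
    #(doubles (residual E x)) + #(lost E x) = #(doubles E) := by
  have hsub : doubles (residual E x) ⊆ doubles E := fun v hv => by
    rw [mem_doubles] at hv ⊢
    exact (hΔ v).antisymm (hv ▸ degree_residual_le)
  rw [add_comm, lost, card_sdiff_add_card_eq_card hsub]

theorem two_mul_card_doubles_le (E : Finset (Finset α)) : 2 * #(doubles E) ≤ ∑ v, degree E v := by
  calc 2 * #(doubles E) = ∑ v ∈ doubles E, degree E v := by
        rw [sum_const_nat fun v hv => mem_doubles.1 hv, mul_comm]
    _ ≤ ∑ v, degree E v := sum_le_sum_of_subset (subset_univ _)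

theorem lost_subset_union (hx : degree E x ≤ 2) (he : e ∈ E) (hf : f ∈ E) (hef : e ≠ f)
    (hxe : x ∈ e) (hxf : x ∈ f) : lost E x ⊆ e ∪ f := fun v hv => by
  obtain ⟨-, g, hg, hxg, hvg⟩ := mem_lost.1 hv
  obtain rfl | rfl := eq_or_eq_of_degree_le_two hx he hf hef hxe hxf hg hxg
  exacts [mem_union_left _ hvg, mem_union_right _ hvg]

theorem lost_subset_of_degree_le_one (hy : degree E y ≤ 1) (he : e ∈ E) (hye : y ∈ e) :
    lost E y ⊆ e := fun v hv => by
  obtain ⟨-, f, hf, hyf, hvf⟩ := mem_lost.1 hv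
  exact eq_of_degree_le_one hy he hye hf hyf ▸ hvf

theorem card_lost_add_card_inter_le (hx : degree E x ≤ 2) (he : e ∈ E) (hf : f ∈ E) (hef : e ≠ f)
    (hxe : x ∈ e) (hxf : x ∈ f) : #(lost E x) + #(e ∩ f) ≤ #e + #f := by
  rw [← card_union_add_card_inter e f]
  exact Nat.add_le_add_right (card_le_card (lost_subset_union hx he hf hef hxe hxf)) _

theorem card_lost_le_seven (h4 : ∀ e ∈ E, #e = 4) (hx : x ∈ doubles E) : #(lost E x) ≤ 7 := by
  have hx2 := mem_doubles.1 hx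
  obtain ⟨e, he, -, hxe⟩ := exists_edge_ne hx2.ge ∅
  obtain ⟨f, hf, hfe, hxf⟩ := exists_edge_ne hx2.ge e
  have hcard := card_lost_add_card_inter_le hx2.le he hf hfe.symm hxe hxf
  have : 0 < #(e ∩ f) := card_pos.2 ⟨x, mem_inter.2 ⟨hxe, hxf⟩⟩
  rw [h4 e he, h4 f hf] at hcard
  omega

theorem card_lost_le_three (h4 : ∀ e ∈ E, #e = 4) (hy : degree E y = 1) : #(lost E y) ≤ 3 := by
  obtain ⟨e, he⟩ := card_pos.1 (hy.symm ▸ one_pos : 0 < degree E y)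
  obtain ⟨he, hye⟩ := mem_filter.1 he
  have hsub : lost E y ⊆ e.erase y := fun v hv => by
    refine mem_erase.2 ⟨?_, lost_subset_of_degree_le_one hy.le he hye hv⟩
    rintro rfl
    have := mem_doubles.1 (mem_lost.1 hv).1
    omega
  have hcard := card_le_card hsub
  rwa [card_erase_of_mem hye, h4 e he] at hcard

theorem irregular_of_mem_of_notMem (h4 : ∀ e ∈ E, #e = 4) (he : e ∈ E) (hx : x ∈ doubles E)
    (hxe : x ∈ e) (hv : v ∉ doubles E) (hve : v ∈ e) : Irregular E := by
  refine ⟨x, hx, ?_⟩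
  have hx2 := mem_doubles.1 hx
  obtain ⟨f, hf, hfe, hxf⟩ := exists_edge_ne hx2.ge e
  have hsub : lost E x ⊆ (e ∪ f).erase v := fun u hu =>
    mem_erase.2 ⟨fun huv => hv (huv ▸ (mem_lost.1 hu).1),
      lost_subset_union hx2.le he hf hfe.symm hxe hxf hu⟩
  have hcard := card_le_card hsub
  rw [card_erase_of_mem (mem_union_left f hve)] at hcard
  have hunion := card_union_add_card_inter e f
  have : 0 < #(e ∩ f) := card_pos.2 ⟨x, mem_inter.2 ⟨hxe, hxf⟩⟩
  rw [h4 e he, h4 f hf] at hunion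
  omega

theorem exists_edge_disjoint_doubles (h4 : ∀ e ∈ E, #e = 4) (hy : degree E y = 1)
    (hreg : ¬ Irregular (residual E y)) (hz : z ∈ lost E y) :
    ∃ l ∈ residual E y, z ∈ l ∧ Disjoint l (doubles (residual E y)) := by
  obtain ⟨hz2, e, he, hye, -⟩ := mem_lost.1 hz
  obtain ⟨l, hl, hle, hzl⟩ := exists_edge_ne (mem_doubles.1 hz2).ge e
  have hyl : y ∉ l := fun hyl => hle (eq_of_degree_le_one hy.le he hye hl hyl)
  have hlres : l ∈ residual E y := mem_residual.2 ⟨hl, hyl⟩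
  refine ⟨l, hlres, hzl, disjoint_left.2 fun v hvl hv => hreg ?_⟩
  exact irregular_of_mem_of_notMem (fun e he => h4 e (residual_subset he)) hlres hv hvl
    (mem_sdiff.1 hz).2 hzl

theorem sum_card_inter_lost_add_card_inter_le (hΔ : ∀ v, degree E v ≤ 2) (he₁ : e₁ ∈ E)
    (he₂ : e₂ ∈ E) (hne : e₁ ≠ e₂) (hx₁ : x ∈ e₁) (hx₂ : x ∈ e₂) {S : Finset (Finset α)}
    (hS : S ⊆ residual E x) :
    ∑ f ∈ S, #(f ∩ lost E x) + #(e₁ ∩ e₂) ≤ #(lost E x) := by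
  have hdisj : (S : Set (Finset α)).PairwiseDisjoint (· ∩ lost E x) := fun f hf g hg hfg =>
    disjoint_left.2 fun v hvf hvg => by
      have hv := two_le_degree (hS hf) (hS hg) hfg (mem_inter.1 hvf).1 (mem_inter.1 hvg).1
      refine (mem_sdiff.1 (mem_inter.1 hvf).2).2 (mem_doubles.2 (hv.antisymm' ?_))
      exact degree_residual_le.trans (hΔ v)
  have hcommon : e₁ ∩ e₂ ⊆ lost E x := fun v hv => by
    rw [mem_inter] at hv
    have hv2 := (hΔ v).antisymm (two_le_degree he₁ he₂ hne hv.1 hv.2)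
    exact mem_lost.2 ⟨mem_doubles.2 hv2, e₁, he₁, hx₁, hv.1⟩
  have hfree : S.biUnion (· ∩ lost E x) ⊆ lost E x \ (e₁ ∩ e₂) := fun v hv => by
    obtain ⟨f, hf, hvf⟩ := mem_biUnion.1 hv
    obtain ⟨hvf, hvl⟩ := mem_inter.1 hvf
    obtain ⟨hfE, hxf⟩ := mem_residual.1 (hS hf)
    refine mem_sdiff.2 ⟨hvl, fun hv12 => ?_⟩
    obtain ⟨hv₁, hv₂⟩ := mem_inter.1 hv12
    obtain rfl | rfl := eq_or_eq_of_degree_le_two (hΔ v) he₁ he₂ hne hv₁ hv₂ hfE hvf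
    exacts [hxf hx₁, hxf hx₂]
  calc ∑ f ∈ S, #(f ∩ lost E x) + #(e₁ ∩ e₂)
      = #(S.biUnion (· ∩ lost E x)) + #(e₁ ∩ e₂) := by rw [card_biUnion hdisj]
    _ ≤ #(lost E x \ (e₁ ∩ e₂)) + #(e₁ ∩ e₂) := by gcongr
    _ = #(lost E x) := card_sdiff_add_card_eq_card hcommon

theorem card_inter_lost_add_card_lost_le (he : e ∈ residual E x) (hye : y ∈ e)
    (hy : degree (residual E x) y = 1) :
    #(e ∩ lost E x) + #(lost (residual E x) y) ≤ #e := by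
  have hdisj : Disjoint (e ∩ lost E x) (lost (residual E x) y) := disjoint_left.2 fun v hv hv' =>
    (mem_sdiff.1 (mem_inter.1 hv).2).2 (mem_sdiff.1 hv').1
  rw [← card_union_of_disjoint hdisj]
  exact card_le_card (union_subset inter_subset_left (lost_subset_of_degree_le_one hy.le he hye))

theorem card_lost_le_add (he : e ∈ residual E x) (hye : y ∈ e)
    (hl : l ∈ residual (residual E x) y) (hlN : Disjoint l (doubles (residual (residual E x) y)))
    (hz : degree E z ≤ 2) (hze : z ∈ e) (hzl : z ∈ l) :
    #(lost E z) ≤ #(lost (residual E x) y) + #(e ∩ lost E x) + #(l ∩ lost E x) := by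
  obtain ⟨hlx, hyl⟩ := mem_residual.1 hl
  have hel : e ≠ l := by
    rintro rfl
    exact hyl hye
  have hsub : lost E z ⊆ lost (residual E x) y ∪ (e ∩ lost E x) ∪ (l ∩ lost E x) := fun v hv => by
    have hv2 := (mem_lost.1 hv).1
    have hvel := lost_subset_union hz (residual_subset he) (residual_subset hlx) hel hze hzl hv
    by_cases hvx : v ∈ lost E x
    · simp only [mem_union, mem_inter] at hvel ⊢
      tauto
    have hv2' : v ∈ doubles (residual E x) := by
      by_contra h
      exact hvx (mem_sdiff.2 ⟨hv2, h⟩)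
    refine mem_union_left _ (mem_union_left _ ?_)
    obtain hve | hvl := mem_union.1 hvel
    · exact mem_lost.2 ⟨hv2', e, he, hye, hve⟩
    · exact mem_sdiff.2 ⟨hv2', disjoint_left.1 hlN hvl⟩
  calc #(lost E z) ≤ _ := card_le_card hsub
    _ ≤ #(lost (residual E x) y ∪ (e ∩ lost E x)) + #(l ∩ lost E x) := card_union_le _ _
    _ ≤ _ := by gcongr; exact card_union_le _ _

theorem card_le_mul_card_image_of_mem {β : Type*} [DecidableEq β] {s t : Finset β}
    {l : β → Finset β} {μ : ℕ} (hst : s ⊆ t) (hl : ∀ z ∈ s, z ∈ l z)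
    (hμ : ∀ f ∈ s.image l, #(t ∩ f) ≤ μ) : #s ≤ μ * #(s.image l) := by
  refine card_le_mul_card_image _ _ fun f hf => (card_le_card fun z hz => ?_).trans (hμ f hf)
  obtain ⟨hzs, rfl⟩ := mem_filter.1 hz
  exact mem_inter.2 ⟨hst hzs, hl z hzs⟩

/-- Edge-hitter's move `x` at the intersection of the edges `e₁` and `e₂`: among the vertices of
degree two it destroys the fewest vertices of degree two, and no two edges share more vertices than
`e₁` and `e₂`. -/
structure IsExtremalMove (E : Finset (Finset α)) (x : α) (e₁ e₂ : Finset α) : Prop where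
  mem_left : e₁ ∈ E
  mem_right : e₂ ∈ E
  ne : e₁ ≠ e₂
  mem_inter : x ∈ e₁ ∩ e₂
  card_lost_le : ∀ w ∈ doubles E, #(lost E x) ≤ #(lost E w)
  card_inter_le : ∀ e ∈ E, ∀ f ∈ E, e ≠ f → #(e ∩ f) ≤ #(e₁ ∩ e₂)

theorem exists_isExtremalMove (h4 : ∀ e ∈ E, #e = 4) (hΔ : ∀ v, degree E v ≤ 2)
    (hne : (doubles E).Nonempty) (h6 : ∀ w ∈ doubles E, 6 ≤ #(lost E w)) :
    ∃ x e₁ e₂, IsExtremalMove E x e₁ e₂ := by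
  have hcard : ∀ e ∈ E, ∀ f ∈ E, e ≠ f → ∀ w ∈ e ∩ f, 6 ≤ #(lost E w) ∧
      #(lost E w) + #(e ∩ f) ≤ 8 := fun e he f hf hef w hw => by
    obtain ⟨hwe, hwf⟩ := mem_inter.1 hw
    have hw2 := two_le_degree he hf hef hwe hwf
    have hle := card_lost_add_card_inter_le (hΔ w) he hf hef hwe hwf
    rw [h4 e he, h4 f hf] at hle
    exact ⟨h6 w (mem_doubles.2 ((hΔ w).antisymm hw2)), hle⟩
  by_cases hlin : ∀ e ∈ E, ∀ f ∈ E, e ≠ f → #(e ∩ f) ≤ 1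
  · obtain ⟨x, hx, hmin⟩ := exists_min_image _ (fun w => #(lost E w)) hne
    have hx2 := (mem_doubles.1 hx).ge
    obtain ⟨e₁, he₁, -, hx₁⟩ := exists_edge_ne hx2 ∅
    obtain ⟨e₂, he₂, hne, hx₂⟩ := exists_edge_ne hx2 e₁
    have hx12 := mem_inter.2 ⟨hx₁, hx₂⟩
    exact ⟨x, e₁, e₂, he₁, he₂, hne.symm, hx12, hmin,
      fun e he f hf hef => (hlin e he f hf hef).trans (card_pos.2 ⟨x, hx12⟩)⟩
  · push Not at hlin
    obtain ⟨e₁, he₁, e₂, he₂, hne, h2⟩ := hlin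
    obtain ⟨x, hx⟩ := card_pos.1 (one_pos.trans h2)
    have hx_card := hcard e₁ he₁ e₂ he₂ hne x hx
    refine ⟨x, e₁, e₂, he₁, he₂, hne, hx, fun w hw => ?_, fun e he f hf hef => ?_⟩
    · have := h6 w hw
      omega
    · obtain hemp | ⟨w, hw⟩ := (e ∩ f).eq_empty_or_nonempty
      · simp [hemp]
      · have := hcard e he f hf hef w hw
        omega

theorem IsExtremalMove.mem_doubles (hx : IsExtremalMove E x e₁ e₂) (hΔ : ∀ v, degree E v ≤ 2) :
    x ∈ doubles E := by
  obtain ⟨hx₁, hx₂⟩ := Finset.mem_inter.1 hx.mem_inter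
  exact TransversalGame.mem_doubles.2 <|
    (hΔ x).antisymm (two_le_degree hx.mem_left hx.mem_right hx.ne hx₁ hx₂)

-- Otherwise every lost vertex `z` of Staller's edge `e` lies in a further edge that avoids the
-- remaining vertices of degree two, and these further edges meet `lost E x` in too many vertices.
theorem IsExtremalMove.irregular_residual (h4 : ∀ e ∈ E, #e = 4) (hΔ : ∀ v, degree E v ≤ 2)
    (hx : IsExtremalMove E x e₁ e₂) (h6 : 6 ≤ #(lost E x)) (hy : degree (residual E x) y = 1)
    (h3 : #(lost (residual E x) y) = 3) : Irregular (residual (residual E x) y) := by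
  by_contra hreg
  have h4' : ∀ e ∈ residual E x, #e = 4 := fun e he => h4 e (residual_subset he)
  obtain ⟨hx₁, hx₂⟩ := Finset.mem_inter.1 hx.mem_inter
  obtain ⟨e, he⟩ := card_pos.1 (hy.symm ▸ one_pos : 0 < degree (residual E x) y)
  obtain ⟨he, hye⟩ := mem_filter.1 he
  have hZe := lost_subset_of_degree_le_one hy.le he hye
  choose! l hl hzl hlN using fun z => exists_edge_disjoint_doubles (z := z) h4' hy hreg
  set L := (lost (residual E x) y).image l
  have hL : ∀ f ∈ L, f ∈ residual (residual E x) y := forall_mem_image.2 hl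
  have heL : e ∉ L := fun heL => (mem_residual.1 (hL e heL)).2 hye
  have hsum : #(e ∩ lost E x) + ∑ f ∈ L, #(f ∩ lost E x) + #(e₁ ∩ e₂) ≤ #(lost E x) := by
    rw [← sum_insert (f := fun f => #(f ∩ lost E x)) heL]
    exact sum_card_inter_lost_add_card_inter_le hΔ hx.mem_left hx.mem_right hx.ne hx₁ hx₂ <|
      insert_subset he fun f hf => residual_subset (hL f hf)
  have hleaf : ∀ f ∈ L, #(lost E x) - 3 - #(e ∩ lost E x) ≤ #(f ∩ lost E x) :=
    forall_mem_image.2 fun z hz => by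
      have hz2 : z ∈ doubles E := TransversalGame.mem_doubles.2 <| (hΔ z).antisymm <|
        (TransversalGame.mem_doubles.1 (mem_lost.1 hz).1).ge.trans degree_residual_le
      have hle := card_lost_le_add he hye (hl z hz) (hlN z hz) (hΔ z) (hZe hz) (hzl z hz)
      have := hx.card_lost_le z hz2
      omega
  have hfibre : 3 ≤ #(e₁ ∩ e₂) * #L := by
    rw [← h3]
    exact card_le_mul_card_image_of_mem hZe hzl fun f hf =>
      hx.card_inter_le e (residual_subset he) f (residual_subset (residual_subset (hL f hf)))
        fun hef => heL (hef ▸ hf)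
  have hμ := card_pos.2 ⟨x, hx.mem_inter⟩
  have hmult := card_lost_add_card_inter_le (hΔ x) hx.mem_left hx.mem_right hx.ne hx₁ hx₂
  have heA := card_inter_lost_add_card_lost_le he hye hy
  have hsum' := card_nsmul_le_sum L _ _ hleaf
  rw [h4 _ hx.mem_left, h4 _ hx.mem_right] at hmult
  rw [h4' e he, h3] at heA
  rw [smul_eq_mul] at hsum'
  generalize #(lost E x) = D, #(e₁ ∩ e₂) = μ, #(e ∩ lost E x) = a at *
  have : μ ≤ 2 := by omega
  have : D ≤ 7 := by omega
  have : a ≤ 1 := by omega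
  interval_cases D <;> interval_cases μ <;> interval_cases a <;> omega

theorem exists_mem_doubles_forall_reply (h4 : ∀ e ∈ E, #e = 4) (hΔ : ∀ v, degree E v ≤ 2)
    (hne : (doubles E).Nonempty) :
    ∃ x ∈ doubles E, (Irregular E → #(lost E x) ≤ 6) ∧
      ∀ y, degree (residual E x) y = 1 → #(lost (residual E x) y) = 3 →
        #(lost E x) ≤ 5 ∨ Irregular (residual (residual E x) y) := by
  by_cases h6 : ∀ w ∈ doubles E, 6 ≤ #(lost E w)
  · obtain ⟨x, e₁, e₂, hx⟩ := exists_isExtremalMove h4 hΔ hne h6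
    have hx2 := hx.mem_doubles hΔ
    refine ⟨x, hx2, ?_, fun y hy h3 => Or.inr (hx.irregular_residual h4 hΔ (h6 x hx2) hy h3)⟩
    rintro ⟨w, hw, hle⟩
    exact (hx.card_lost_le w hw).trans hle
  · push Not at h6
    obtain ⟨x, hx, hlt⟩ := h6
    exact ⟨x, hx, fun _ => hlt.le, fun y _ _ => Or.inl (Nat.le_of_lt_succ hlt)⟩

open Classical in
/-- The potential `9 m - n₂ - ι` for hypergraphs with maximum degree at most two, where `n₂` is the
number of vertices of degree two and `ι` is `1` or `0` according to whether `E` is irregular. -/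
noncomputable def degreeTwoPotential (E : Finset (Finset α)) : ℤ :=
  9 * #E - #(doubles E) - if Irregular E then 1 else 0

theorem nine_le_degreeTwoPotential (h4 : ∀ e ∈ E, #e = 4) (hne : (doubles E).Nonempty) :
    9 ≤ degreeTwoPotential E := by
  obtain ⟨x, hx⟩ := hne
  have hcard : 2 ≤ #E := mem_doubles.1 hx ▸ degree_le_card
  have hle := two_mul_card_doubles_le E
  rw [sum_degree, sum_const_nat h4] at hle
  rw [degreeTwoPotential]
  split_ifs <;> omega

theorem degreeTwoPotential_residual_residual_add_le (h4 : ∀ e ∈ E, #e = 4)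
    (hΔ : ∀ v, degree E v ≤ 2) (hx : x ∈ doubles E) (hirr : Irregular E → #(lost E x) ≤ 6)
    (hreply : degree (residual E x) y = 1 → #(lost (residual E x) y) = 3 →
      #(lost E x) ≤ 5 ∨ Irregular (residual (residual E x) y))
    (hy : 0 < degree (residual E x) y) :
    degreeTwoPotential (residual (residual E x) y) + 2 * 9 ≤ degreeTwoPotential E := by
  have h4' : ∀ e ∈ residual E x, #e = 4 := fun e he => h4 e (residual_subset he)
  have hΔ' : ∀ v, degree (residual E x) v ≤ 2 := fun v => degree_residual_le.trans (hΔ v)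
  have hx2 := mem_doubles.1 hx
  have hx_card := card_residual_add_degree (E := E) (x := x)
  have hy_card := card_residual_add_degree (E := residual E x) (x := y)
  have hx_doubles := card_doubles_residual_add_card_lost hΔ x
  have hy_doubles := card_doubles_residual_add_card_lost hΔ' y
  have hx_lost := card_lost_le_seven h4 hx
  rw [degreeTwoPotential, degreeTwoPotential]
  obtain hy1 | hy2 : degree (residual E x) y = 1 ∨ degree (residual E x) y = 2 := by
    have := hΔ' y
    omega
  · have hy_lost := card_lost_le_three h4' hy1
    have := hreply hy1
    split_ifs <;> grind
  · have hy_lost := card_lost_le_seven h4' (mem_doubles.2 hy2)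
    split_ifs <;> omega

end DegreeTwo

section Main

variable {E : Finset (Finset V)}

theorem nine_mul_gameVal_le_degreeTwoPotential (h4 : ∀ e ∈ E, #e = 4) (hΔ : ∀ v, degree E v ≤ 2) :
    9 * gameVal true E ≤ degreeTwoPotential E := by
  refine mul_gameVal_le_of_potential (by norm_num)
    (P := fun E => (∀ e ∈ E, #e = 4) ∧ ∀ v, degree E v ≤ 2)
    (fun E x hE => ⟨fun e he => hE.1 e (residual_subset he),
      fun v => degree_residual_le.trans (hE.2 v)⟩) ?_ ⟨h4, hΔ⟩
  rintro E ⟨h4, hΔ⟩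
  obtain hemp | hne := (doubles E).eq_empty_or_nonempty
  · have hreg : ¬ Irregular E := by
      rintro ⟨x, hx, -⟩
      simp [hemp] at hx
    have hle := gameVal_true_le_card E
    left
    rw [degreeTwoPotential, if_neg hreg, hemp, card_empty]
    omega
  · obtain ⟨x, hx, hirr, hreply⟩ := exists_mem_doubles_forall_reply h4 hΔ hne
    have hx_pos : 0 < degree E x := mem_doubles.1 hx ▸ two_pos
    exact Or.inr ⟨nine_le_degreeTwoPotential h4 hne, x, mem_playable.2 hx_pos, fun y hy =>
      degreeTwoPotential_residual_residual_add_le h4 hΔ hx hirr (hreply y) (mem_playable.1 hy)⟩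

/-- The vertex weights used while the maximum degree is three. The value at two is forced by
comparison with `degreeTwoPotential`, whose unit is worth `336 = 3024 / 9`: an edge of weight `852`
leaves `3024 - 852 = 4 * 543` to its four vertices, and `750 = 2 * 543 - 336`. -/
def weightThree : ℕ → ℤ
  | 0 => 0
  | 1 => 655
  | 2 => 750
  | _ => 845

/-- The vertex weights used while the maximum degree is at least four. -/
def weightFour : ℕ → ℤ
  | 0 => 0
  | 1 => 831
  | 2 => 838
  | 3 => 845
  | _ => 852

theorem weightFour_le (d : ℕ) : weightFour d ≤ 852 := by
  unfold weightFour
  split <;> norm_num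

theorem weightFour_le_succ (d : ℕ) : weightFour d ≤ weightFour (d + 1) := by
  match d with
  | 0 | 1 | 2 | 3 => decide
  | _ + 4 => rfl

theorem degreeTwoPotential_le_weight (h4 : ∀ e ∈ E, #e = 4) (hΔ : ∀ v, degree E v ≤ 2) :
    336 * degreeTwoPotential E ≤ weight 852 weightThree E := by
  have hvertex : ∀ v, 543 * (degree E v : ℤ) ≤
      weightThree (degree E v) + if degree E v = 2 then 336 else 0 := fun v => by
    have := hΔ v
    interval_cases degree E v <;> decide
  have hsum := sum_le_sum fun v (_ : v ∈ univ) => hvertex v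
  have hdeg : ∑ v, (degree E v : ℤ) = 4 * #E := by
    rw [← Nat.cast_sum, sum_degree, sum_const_nat h4]
    push_cast
    ring
  have hdoubles : ∑ v, (if degree E v = 2 then 336 else 0 : ℤ) = 336 * #(doubles E) := by
    rw [← sum_filter, sum_const, nsmul_eq_mul, mul_comm]
    rfl
  rw [sum_add_distrib, ← mul_sum, hdeg, hdoubles] at hsum
  rw [weight, degreeTwoPotential]
  split_ifs <;> linarith

theorem mul_gameVal_le_weightThree (h4 : ∀ e ∈ E, #e = 4) (hΔ : ∀ v, degree E v ≤ 3) :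
    3024 * gameVal true E ≤ weight 852 weightThree E := by
  refine mul_gameVal_le_weight_succ (k := 3) (Δ := 2) (δ := 95) (by norm_num) (by norm_num)
    (by norm_num) rfl (by decide) (by decide) (by decide) (fun E h4 hΔ => ?_) h4 hΔ
  have := nine_mul_gameVal_le_degreeTwoPotential h4 hΔ
  have := degreeTwoPotential_le_weight h4 hΔ
  linarith

theorem mul_gameVal_le_weightFour_of_degree_le (h4 : ∀ e ∈ E, #e = 4) (n : ℕ)
    (hΔ : ∀ v, degree E v ≤ n + 4) : 3024 * gameVal true E ≤ weight 852 weightFour E := by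
  induction n generalizing E with
  | zero =>
    refine mul_gameVal_le_weight_succ (k := 3) (Δ := 3) (δ := 7) (by norm_num) (by norm_num)
      (by norm_num) rfl (by decide) (by decide) (by decide) (fun E h4 hΔ => ?_) h4 hΔ
    refine (mul_gameVal_le_weightThree h4 hΔ).trans ?_
    rw [weight, weight]
    gcongr with v
    have := hΔ v
    interval_cases degree E v <;> decide
  | succ n ih =>
    have hlast : weightFour (n + 4 + 1) = 852 := rfl
    have hone : weightFour 1 = 831 := rfl
    refine mul_gameVal_le_weight_succ (k := 3) (Δ := n + 4) (δ := 0) (by norm_num) (by norm_num)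
      le_rfl rfl (fun d _ => by simpa using weightFour_le_succ d) ?_ ?_ (fun E => ih) h4 hΔ
    all_goals
      push_cast [hlast, hone]
      linarith

theorem mul_gameVal_le (h4 : ∀ e ∈ E, #e = 4) :
    3024 * (gameVal true E : ℤ) ≤ 852 * (Fintype.card V + #E) := by
  calc 3024 * (gameVal true E : ℤ) ≤ 852 * #E + ∑ v, weightFour (degree E v) :=
        mul_gameVal_le_weightFour_of_degree_le h4 #E fun v => degree_le_card.trans le_self_add
    _ ≤ 852 * #E + ∑ _v : V, 852 := by
        gcongr
        exact weightFour_le _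
    _ = 852 * (Fintype.card V + #E) := by
        rw [sum_const, card_univ, nsmul_eq_mul]
        ring

end Main

end TransversalGame

/-- If `H` is a `4`-uniform hypergraph, then `τ_g(H) ≤ (71/252)(n(H) + m(H))`. -/
theorem gameTransversalNum_le_of_four_uniform
    {V : Type} [Fintype V] [DecidableEq V] (E : Finset (Finset V))
    (h4 : ∀ e ∈ E, e.card = 4) :
    (gameTransversalNum E : ℚ) ≤ (71 / 252) * (Fintype.card V + E.card) := by
  have h : 3024 * (gameTransversalNum E : ℚ) ≤ 852 * (Fintype.card V + E.card) :=
    mod_cast TransversalGame.mul_gameVal_le h4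
  linarith
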